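/- Let (τ_i)_{1≤i≤σ_n} be independent critical geometric Galton–Watson trees, with σ_n = o(√n), and let i_* be the (smallest) index of a tree of maximal size. Then the total variation distance between the conditional law of the family (τ_i)_{i≠i_*} given Σ_{i=1}^{σ_n}|τ_i| = n, and the law of σ_n − 1 independent (unconditioned) critical geometric Galton–Watson trees, tends to 0 as n → ∞. -/

import Mathlib

open scoped ENNReal Classical
open Filter

/-- Finite rooted plane trees. -/
inductive PTree : Type
  | node : List PTree → PTree

mutual
  /-- The number of edges of a plane tree. -/
  def PTree.edges : PTree → ℕ
    | .node ts => ts.length + PTree.edgesList ts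
  /-- The total number of edges of a list of plane trees. -/
  def PTree.edgesList : List PTree → ℕ
    | [] => 0
    | t :: ts => PTree.edges t + PTree.edgesList ts
end

mutual
  /-- The law of the critical geometric Galton–Watson tree: `P(τ = t) = ∏_v 2^{-c(v)-1}`. -/
  noncomputable def gwProb : PTree → ℝ≥0∞
    | .node ts => (2 : ℝ≥0∞)⁻¹ ^ (ts.length + 1) * gwProbList ts
  /-- Product of `gwProb` over a list of trees. -/
  noncomputable def gwProbList : List PTree → ℝ≥0∞
    | [] => 1
    | t :: ts => gwProb t * gwProbList ts
end

/-- Mass of a forest of `m` independent critical geometric Galton–Watson trees. -/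
noncomputable def forestMass {m : ℕ} (f : Fin m → PTree) : ℝ≥0∞ :=
  ∏ i, gwProb (f i)

/-- The smallest index of a tree of maximal size in a forest. -/
noncomputable def istar {m : ℕ} (f : Fin (m + 1) → PTree) : Fin (m + 1) :=
  (Finset.univ.filter fun i => ∀ j, (f j).edges ≤ (f i).edges).min'
    (by
      obtain ⟨b, -, hb⟩ :=
        Finset.exists_max_image (Finset.univ : Finset (Fin (m + 1)))
          (fun i => (f i).edges) ⟨0, Finset.mem_univ 0⟩
      exact ⟨b, Finset.mem_filter.mpr ⟨Finset.mem_univ _, fun j => hb j (Finset.mem_univ j)⟩⟩)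

/-- Remove the coordinate `i` from a forest. -/
def removeAt {m : ℕ} (i : Fin (m + 1)) (f : Fin (m + 1) → PTree) : Fin m → PTree :=
  fun j => f (i.succAbove j)

/-- The conditional law, given that `m+1` independent critical geometric Galton–Watson trees
have total size `n`, of the family of trees obtained by removing the (first) largest one. -/
noncomputable def condLawRemoved (m n : ℕ) (g : Fin m → PTree) : ℝ≥0∞ :=
  (∑' f : Fin (m + 1) → PTree,
      if removeAt (istar f) f = g ∧ (∑ i, (f i).edges) = n then forestMass f else 0) /
    ∑' f : Fin (m + 1) → PTree, if (∑ i, (f i).edges) = n then forestMass f else 0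

/-!
Splitting the first tree at its first child shows that `m` critical geometric Galton–Watson trees
have total size `n` with probability `p m n = m / (2n + m) * P (X = m)`, where `X` is the position
of a simple random walk at time `2n + m`. For fixed `n` this probability of `X = m` decreases in
`m`, and `p 1` is decreasing, so `p m n ≤ m * p 1 k` whenever `k ≤ n` and `0 < n`.

Let `g` be a forest of `m` trees of total size `s < n / 2`. The forests of size `n` that leave `g`
when their largest tree is removed arise by inserting a tree with `n - s` edges at one of the
`m + 1` places, so the conditional law gives `g` its unconditioned mass times the factor
`(m + 1) * p 1 (n - s) / p (m + 1) n`, which is at least `1`. Hence the total variation distance is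
at most the probability that `m` trees have total size at least `n / 2`. Summing `p m k ≤ m * p 1 k`
bounds this by `m` times the tail of `p 1`, which telescopes to the probability that a simple
random walk is at its starting point at a time of order `n`. This gives the bound `m / √n`.
-/

/-- The number of plane forests with `m` trees and `n` edges, computed by splitting the first tree:
it is a single vertex, or it consists of the subtree at the first child of its root and the rest. -/
def ballotNumber : ℕ → ℕ → ℕ
  | 0, 0 => 1
  | 0, _ + 1 => 0
  | m + 1, 0 => ballotNumber m 0
  | m + 1, n + 1 => ballotNumber m (n + 1) + ballotNumber (m + 2) n
  termination_by m n => (n, m)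

theorem ballotNumber_zero_right (m : ℕ) : ballotNumber m 0 = 1 := by
  induction m with
  | zero => simp only [ballotNumber]
  | succ m ih => rw [ballotNumber, ih]

/-- The cycle lemma. It is stated without division because `m / (2 * n + m)` would read `0 / 0` at
`m = n = 0`, where there is one forest. -/
theorem ballotNumber_mul (m n : ℕ) :
    (2 * n + m) * ballotNumber m n = m * (2 * n + m).choose n := by
  fun_induction ballotNumber m n with
  | case1 => rfl
  | case2 n => simp
  | case3 m _ => simp [ballotNumber_zero_right]
  | case4 m n ih₀ ih₂ =>
    set M := 2 * n + m + 2
    have h₀ : M * ballotNumber m (n + 1) = m * M.choose (n + 1) := by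
      convert ih₀ using 2 <;> grind
    have h₂ : M * ballotNumber (m + 2) n = (m + 2) * M.choose n := ih₂
    have absorb : M.choose (n + 1) * (n + 1) = M.choose n * (n + m + 2) := by
      rw [Nat.choose_succ_right_eq]
      congr 1
      grind
    have hM : 2 * (n + 1) + (m + 1) = M + 1 := by grind
    rw [hM, Nat.choose_succ_succ]
    refine Nat.eq_of_mul_eq_mul_left (show 0 < M by grind) ?_
    have hM' : (M : ℤ) = 2 * n + m + 2 := by grind
    zify at h₀ h₂ absorb ⊢
    linear_combination (M + 1 : ℤ) * (h₀ + h₂) - 2 * absorb +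
      ((M.choose n : ℤ) - (M.choose (n + 1) : ℤ)) * hM'

/-- The probability that a simple random walk with `2 * n + m` steps makes exactly `n` of them
downwards, that is, ends at height `m`. -/
noncomputable def walkProb (m n : ℕ) : ℝ :=
  (2 * n + m).choose n / 2 ^ (2 * n + m)

theorem walkProb_pos (m n : ℕ) : 0 < walkProb m n := by
  have : 0 < (2 * n + m).choose n := Nat.choose_pos (by omega)
  unfold walkProb
  positivity

theorem walkProb_succ_left (m n : ℕ) :
    walkProb (m + 1) n = walkProb m n * ((2 * n + m + 1) / (2 * (n + m + 1))) := by
  have h : ((2 * n + m + 1).choose n : ℝ) * (n + m + 1) =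
      (2 * n + m).choose n * (2 * n + m + 1) := by
    have := Nat.choose_mul_succ_eq (2 * n + m) n
    rw [show 2 * n + m + 1 - n = n + m + 1 by omega] at this
    exact_mod_cast this.symm
  rw [walkProb, walkProb, ← add_assoc, pow_succ]
  field_simp
  linear_combination h

theorem antitone_walkProb_left (n : ℕ) : Antitone fun m => walkProb m n :=
  antitone_nat_of_succ_le fun m => by
    rw [walkProb_succ_left]
    refine mul_le_of_le_one_right (walkProb_pos m n).le ((div_le_one (by positivity)).2 ?_)
    have : (0 : ℝ) ≤ m := m.cast_nonneg
    linarith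

theorem walkProb_zero_succ_eq_walkProb_one (n : ℕ) : walkProb 0 (n + 1) = walkProb 1 n := by
  have h : (2 * (n + 1)).choose (n + 1) = 2 * (2 * n + 1).choose n := by
    rw [show 2 * (n + 1) = 2 * n + 1 + 1 by ring, Nat.choose_succ_succ, Nat.choose_symm_half]
    ring
  rw [walkProb, walkProb, add_zero, h, show 2 * (n + 1) = 2 * n + 1 + 1 by ring, pow_succ]
  push_cast
  field_simp

theorem walkProb_zero_succ (n : ℕ) :
    walkProb 0 (n + 1) = walkProb 0 n * ((2 * n + 1) / (2 * n + 2)) := by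
  rw [walkProb_zero_succ_eq_walkProb_one, walkProb_succ_left]
  push_cast
  ring

theorem walkProb_zero_sub_succ (n : ℕ) :
    walkProb 0 n - walkProb 0 (n + 1) = walkProb 0 n / (2 * n + 2) := by
  rw [walkProb_zero_succ]
  field_simp
  ring

theorem antitone_walkProb_zero : Antitone (walkProb 0) :=
  antitone_nat_of_succ_le fun n => by
    have := walkProb_pos 0 n
    rw [← sub_nonneg, walkProb_zero_sub_succ]
    positivity

theorem walkProb_zero_sq_mul_le_one (n : ℕ) : walkProb 0 n ^ 2 * (2 * n + 1) ≤ 1 := by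
  induction n with
  | zero => simp [walkProb]
  | succ n ih =>
    have h : ((2 * n + 1) * (2 * n + 3) / (2 * n + 2) ^ 2 : ℝ) ≤ 1 := by
      rw [div_le_one (by positivity)]
      linarith
    calc walkProb 0 (n + 1) ^ 2 * (2 * (n + 1 : ℕ) + 1)
        = walkProb 0 n ^ 2 * (2 * n + 1) * ((2 * n + 1) * (2 * n + 3) / (2 * n + 2) ^ 2) := by
          rw [walkProb_zero_succ]
          push_cast
          field_simp
          ring
      _ ≤ 1 := mul_le_one₀ ih (by positivity) h

theorem walkProb_zero_le (n : ℕ) : walkProb 0 n ≤ 1 / √(2 * n + 1) := by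
  rw [le_div_iff₀ (by positivity)]
  have h := walkProb_zero_sq_mul_le_one n
  rw [← Real.sq_sqrt (show (0 : ℝ) ≤ 2 * n + 1 by positivity), ← mul_pow] at h
  have := walkProb_pos 0 n
  exact (sq_le_one_iff₀ (by positivity)).1 h

theorem tendsto_walkProb_zero : Tendsto (walkProb 0) atTop (nhds 0) := by
  refine squeeze_zero (fun n => (walkProb_pos 0 n).le) walkProb_zero_le ?_
  simp only [one_div]
  refine tendsto_inv_atTop_zero.comp (Real.tendsto_sqrt_atTop.comp ?_)
  exact tendsto_atTop_add_const_right _ _ (tendsto_natCast_atTop_atTop.const_mul_atTop two_pos)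

theorem hasSum_walkProb_zero_div (K : ℕ) :
    HasSum (fun k => walkProb 0 (k + K) / (2 * (k + K : ℕ) + 2)) (walkProb 0 K) := by
  rw [hasSum_iff_tendsto_nat_of_nonneg fun k => div_nonneg (walkProb_pos 0 _).le (by positivity)]
  have partial_sum (n : ℕ) :
      ∑ k ∈ Finset.range n, walkProb 0 (k + K) / (2 * (k + K : ℕ) + 2) =
        walkProb 0 K - walkProb 0 (n + K) := by
    simp only [← walkProb_zero_sub_succ, add_right_comm _ K 1]
    simpa only [zero_add] using Finset.sum_range_sub' (fun k => walkProb 0 (k + K)) n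
  simp only [partial_sum]
  simpa only [sub_zero] using
    ((tendsto_add_atTop_iff_nat K).2 tendsto_walkProb_zero).const_sub (walkProb 0 K)

namespace PTree

/-- Attach `a` as a new first child of the root of `b`. -/
def graft (a : PTree) : PTree → PTree
  | .node ts => .node (a :: ts)

theorem edges_leaf : (node []).edges = 0 := by
  simp only [edges, edgesList, List.length_nil, add_zero]

theorem gwProb_leaf : gwProb (node []) = 2⁻¹ := by
  simp only [gwProb, gwProbList, List.length_nil, zero_add, pow_one, mul_one]

theorem edges_graft (a b : PTree) : (graft a b).edges = a.edges + b.edges + 1 := by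
  cases b with
  | node ts => simp only [graft, edges, edgesList, List.length_cons]; ring

theorem gwProb_graft (a b : PTree) : gwProb (graft a b) = 2⁻¹ * (gwProb a * gwProb b) := by
  cases b with
  | node ts => simp only [graft, gwProb, gwProbList, List.length_cons]; ring

/-- A plane tree is a single vertex, or it splits uniquely into the subtree at the first child of
its root and the rest. -/
def splitEquiv : Unit ⊕ PTree × PTree ≃ PTree where
  toFun
    | .inl _ => .node []
    | .inr (a, b) => graft a b
  invFun
    | .node [] => .inl ()
    | .node (a :: ts) => .inr (a, .node ts)
  left_inv
    | .inl _ => rfl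
    | .inr (_, .node _) => rfl
  right_inv
    | .node [] => rfl
    | .node (_ :: _) => rfl

theorem tsum_eq_leaf_add_graft (h : PTree → ℝ≥0∞) :
    ∑' t, h t = h (node []) + ∑' a, ∑' b, h (graft a b) := by
  rw [← splitEquiv.tsum_eq, ENNReal.summable.tsum_sum ENNReal.summable, tsum_fintype,
    Finset.univ_unique, Finset.sum_singleton, ENNReal.tsum_prod']
  rfl

end PTree

/-- The expectation of `φ` at the total size of `m` independent critical geometric
Galton–Watson trees. -/
noncomputable def forestExp (m : ℕ) (φ : ℕ → ℝ≥0∞) : ℝ≥0∞ :=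
  ∑' f : Fin m → PTree, forestMass f * φ (∑ i, (f i).edges)

theorem forestExp_zero (φ : ℕ → ℝ≥0∞) : forestExp 0 φ = φ 0 := by
  simp [forestExp, forestMass]

theorem forestExp_succ (m : ℕ) (φ : ℕ → ℝ≥0∞) :
    forestExp (m + 1) φ = ∑' t, gwProb t * forestExp m fun k => φ (t.edges + k) := by
  simp only [forestExp, ← ENNReal.tsum_mul_left]
  rw [← (Fin.consEquiv fun _ => PTree).tsum_eq, ENNReal.tsum_prod']
  simp [forestMass, Fin.consEquiv, Fin.prod_univ_succ, Fin.sum_univ_succ, mul_assoc]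

theorem forestExp_succ_eq_leaf_add_graft (m : ℕ) (φ : ℕ → ℝ≥0∞) :
    forestExp (m + 1) φ =
      2⁻¹ * forestExp m φ + 2⁻¹ * forestExp (m + 2) fun k => φ (k + 1) := by
  rw [forestExp_succ, PTree.tsum_eq_leaf_add_graft, forestExp_succ (m + 1)]
  simp only [forestExp_succ m, PTree.gwProb_leaf, PTree.edges_leaf, PTree.gwProb_graft,
    PTree.edges_graft, zero_add, ← ENNReal.tsum_mul_left]
  congr! 5 with a b
  simp only [mul_assoc, add_right_comm _ 1, ← add_assoc]

/-- The probability that `m` independent critical geometric Galton–Watson trees have total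
size `n`. -/
noncomputable def sizeProb (m n : ℕ) : ℝ≥0∞ :=
  ∑' f : Fin m → PTree, if ∑ i, (f i).edges = n then forestMass f else 0

theorem sizeProb_eq_forestExp (m n : ℕ) :
    sizeProb m n = forestExp m fun k => if k = n then 1 else 0 := by
  simp only [sizeProb, forestExp, mul_ite, mul_one, mul_zero]

theorem forestExp_eq_tsum_sizeProb (m : ℕ) (φ : ℕ → ℝ≥0∞) :
    forestExp m φ = ∑' k, sizeProb m k * φ k := by
  simp only [sizeProb, forestExp, ← ENNReal.tsum_mul_right, ite_mul, zero_mul]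
  rw [ENNReal.tsum_comm]
  simp only [tsum_ite_eq']

theorem sizeProb_zero_left (n : ℕ) : sizeProb 0 n = if n = 0 then 1 else 0 := by
  simp only [sizeProb_eq_forestExp, forestExp_zero, eq_comm]

theorem sizeProb_succ_zero (m : ℕ) : sizeProb (m + 1) 0 = 2⁻¹ * sizeProb m 0 := by
  rw [sizeProb_eq_forestExp, forestExp_succ_eq_leaf_add_graft, ← sizeProb_eq_forestExp]
  simp only [forestExp, Nat.succ_ne_zero, if_false, mul_zero, tsum_zero, add_zero]

theorem sizeProb_succ_succ (m n : ℕ) :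
    sizeProb (m + 1) (n + 1) = 2⁻¹ * sizeProb m (n + 1) + 2⁻¹ * sizeProb (m + 2) n := by
  simp only [sizeProb_eq_forestExp, forestExp_succ_eq_leaf_add_graft m, add_left_inj]

theorem sizeProb_one (n : ℕ) :
    sizeProb 1 n = ∑' t : PTree, if t.edges = n then gwProb t else 0 := by
  simp only [sizeProb_eq_forestExp, forestExp_succ, forestExp_zero, add_zero, mul_ite, mul_one,
    mul_zero]

theorem sizeProb_eq_ballotNumber_mul (m n : ℕ) :
    sizeProb m n = ballotNumber m n * 2⁻¹ ^ (2 * n + m) := by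
  fun_induction ballotNumber m n with
  | case1 => simp [sizeProb_zero_left]
  | case2 n => simp [sizeProb_zero_left]
  | case3 m ih =>
    rw [sizeProb_succ_zero, ih, Nat.succ_eq_add_one]
    ring
  | case4 m n ih₀ ih₂ =>
    rw [sizeProb_succ_succ, ih₀, ih₂, Nat.cast_add, Nat.succ_eq_add_one, Nat.succ_eq_add_one]
    ring

theorem sizeProb_eq_ofReal {m n : ℕ} (h : 2 * n + m ≠ 0) :
    sizeProb m n = ENNReal.ofReal (m / (2 * n + m) * walkProb m n) := by
  have hcount : (ballotNumber m n : ℝ) = m / (2 * n + m) * (2 * n + m).choose n := by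
    have hne : (2 * n + m : ℝ) ≠ 0 := mod_cast h
    have hcycle : (2 * n + m : ℝ) * ballotNumber m n = m * (2 * n + m).choose n :=
      mod_cast ballotNumber_mul m n
    field_simp
    rwa [mul_comm]
  rw [sizeProb_eq_ballotNumber_mul, walkProb, ← mul_div_assoc, ← hcount, div_eq_mul_inv, ← inv_pow,
    ENNReal.ofReal_mul (by positivity), ENNReal.ofReal_natCast, ENNReal.ofReal_pow (by positivity),
    ENNReal.ofReal_inv_of_pos two_pos, ENNReal.ofReal_ofNat]

theorem sizeProb_one_eq_ofReal (n : ℕ) :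
    sizeProb 1 n = ENNReal.ofReal (walkProb 0 n / (2 * n + 2)) := by
  rw [sizeProb_eq_ofReal (by omega), walkProb_succ_left]
  congr 1
  push_cast
  field_simp
  ring

theorem sizeProb_ne_top (m n : ℕ) : sizeProb m n ≠ ∞ := by
  rw [sizeProb_eq_ballotNumber_mul]
  finiteness

theorem sizeProb_succ_ne_zero (m n : ℕ) : sizeProb (m + 1) n ≠ 0 := by
  rw [sizeProb_eq_ofReal (by omega), ← pos_iff_ne_zero, ENNReal.ofReal_pos]
  have := walkProb_pos (m + 1) n
  positivity

theorem sizeProb_le_mul_sizeProb_one {m n k : ℕ} (hn : n ≠ 0) (hkn : k ≤ n) :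
    sizeProb m n ≤ m * sizeProb 1 k := by
  rw [sizeProb_eq_ofReal (by omega), sizeProb_one_eq_ofReal, ← ENNReal.ofReal_natCast,
    ← ENNReal.ofReal_mul (by positivity)]
  refine ENNReal.ofReal_le_ofReal ?_
  rcases m with _ | m
  · simp
  calc ((m + 1 : ℕ) : ℝ) / (2 * n + (m + 1 : ℕ)) * walkProb (m + 1) n
      ≤ (m + 1 : ℕ) / (2 * n + 1) * walkProb 1 n := by
        have := (walkProb_pos (m + 1) n).le
        have := antitone_walkProb_left n (show 1 ≤ m + 1 by omega)
        gcongr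
        simp
    _ = (m + 1 : ℕ) * (walkProb 0 n / (2 * n + 2)) := by
        rw [walkProb_succ_left]
        push_cast
        field_simp
        ring
    _ ≤ (m + 1 : ℕ) * (walkProb 0 k / (2 * k + 2)) := by
        have := (walkProb_pos 0 k).le
        have := antitone_walkProb_zero hkn
        gcongr

theorem tsum_sizeProb_one_tail (K : ℕ) :
    ∑' k, sizeProb 1 (k + K) = ENNReal.ofReal (walkProb 0 K) := by
  have h := hasSum_walkProb_zero_div K
  simp only [sizeProb_one_eq_ofReal]
  rw [← ENNReal.ofReal_tsum_of_nonneg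
    (fun _ => div_nonneg (walkProb_pos 0 _).le (by positivity)) h.summable, h.tsum_eq]

theorem tsum_gwProb : ∑' t, gwProb t = 1 := by
  calc ∑' t, gwProb t = forestExp 1 fun _ => 1 := by simp [forestExp_succ, forestExp_zero]
    _ = ∑' k, sizeProb 1 (k + 0) := by simp [forestExp_eq_tsum_sizeProb]
    _ = 1 := by rw [tsum_sizeProb_one_tail]; simp [walkProb]

theorem tsum_forestMass (m : ℕ) : ∑' f : Fin m → PTree, forestMass f = 1 := by
  suffices forestExp m (fun _ => 1) = 1 by simpa only [forestExp, mul_one] using this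
  induction m with
  | zero => exact forestExp_zero _
  | succ m ih => simp only [forestExp_succ, ih, mul_one, tsum_gwProb]

theorem tsum_forestMass_large_le (m : ℕ) {K : ℕ} (hK : K ≠ 0) :
    (∑' f : Fin m → PTree, if K ≤ ∑ i, (f i).edges then forestMass f else 0) ≤
      m * ENNReal.ofReal (walkProb 0 K) := by
  calc (∑' f : Fin m → PTree, if K ≤ ∑ i, (f i).edges then forestMass f else 0)
      = ∑' k, if K ≤ k then sizeProb m k else 0 := by
        simpa only [forestExp, mul_ite, mul_one, mul_zero] using
          forestExp_eq_tsum_sizeProb m fun k => if K ≤ k then 1 else 0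
    _ = ∑' k, sizeProb m (k + K) := by
        rw [← Summable.sum_add_tsum_nat_add' (k := K) ENNReal.summable, Finset.sum_eq_zero,
          zero_add]
        · simp only [le_add_iff_nonneg_left, zero_le, if_true]
        · intro k hk
          exact if_neg (not_le.2 (Finset.mem_range.1 hk))
    _ ≤ ∑' k, m * sizeProb 1 (k + K) :=
        ENNReal.tsum_le_tsum fun k => sizeProb_le_mul_sizeProb_one (by omega) le_rfl
    _ = m * ENNReal.ofReal (walkProb 0 K) := by
        rw [ENNReal.tsum_mul_left, tsum_sizeProb_one_tail]

theorem istar_eq_of_forall_lt {m : ℕ} {f : Fin (m + 1) → PTree} {i : Fin (m + 1)}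
    (h : ∀ j, (f (i.succAbove j)).edges < (f i).edges) : istar f = i := by
  have hmax : (Finset.univ.filter fun k => ∀ j, (f j).edges ≤ (f k).edges) = {i} := by
    ext k
    simp only [Finset.mem_filter_univ, Finset.mem_singleton]
    constructor
    · intro hk
      by_contra hne
      obtain ⟨j, rfl⟩ := Fin.exists_succAbove_eq hne
      exact (h j).not_ge (hk i)
    · rintro rfl j
      rcases Fin.eq_self_or_eq_succAbove k j with rfl | ⟨j, rfl⟩
      · rfl
      · exact (h j).le
  simp only [istar, hmax, Finset.min'_singleton]

theorem removeAt_insertNth {m : ℕ} (i : Fin (m + 1)) (t : PTree) (g : Fin m → PTree) :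
    removeAt i (i.insertNth t g) = g :=
  funext fun j => Fin.insertNth_apply_succAbove (α := fun _ => PTree) i t g j

theorem tsum_ite_removeAt_istar_eq {m : ℕ} (F : (Fin (m + 1) → PTree) → ℝ≥0∞)
    (g : Fin m → PTree) :
    (∑' f, if removeAt (istar f) f = g then F f else 0) =
      ∑ i : Fin (m + 1), ∑' t : PTree,
        if istar (i.insertNth t g : Fin (m + 1) → PTree) = i then F (i.insertNth t g) else 0 := by
  calc (∑' f, if removeAt (istar f) f = g then F f else 0)
      = ∑' f, ∑ i, if istar f = i then if removeAt i f = g then F f else 0 else 0 := by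
        simp only [Finset.sum_ite_eq, Finset.mem_univ, if_true]
    _ = ∑ i, ∑' f, if istar f = i then if removeAt i f = g then F f else 0 else 0 :=
        Summable.tsum_finsetSum fun _ _ => ENNReal.summable
    _ = _ := by
        refine Finset.sum_congr rfl fun i _ => ?_
        rw [← (Fin.insertNthEquiv (fun _ => PTree) i).tsum_eq, ENNReal.tsum_prod']
        refine tsum_congr fun t => ?_
        simp only [Fin.insertNthEquiv, Equiv.coe_fn_mk, removeAt_insertNth]
        rw [tsum_eq_single g fun g' hg' => by rw [if_neg hg', ite_self], if_pos rfl]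

theorem sum_edges_insertNth {m : ℕ} (i : Fin (m + 1)) (t : PTree) (g : Fin m → PTree) :
    ∑ j, ((i.insertNth t g : Fin (m + 1) → PTree) j).edges = t.edges + ∑ j, (g j).edges := by
  simp only [Fin.sum_univ_succAbove _ i, Fin.insertNth_apply_same, Fin.insertNth_apply_succAbove]

theorem forestMass_insertNth {m : ℕ} (i : Fin (m + 1)) (t : PTree) (g : Fin m → PTree) :
    forestMass (i.insertNth t g : Fin (m + 1) → PTree) = gwProb t * forestMass g := by
  simp only [forestMass, Fin.prod_univ_succAbove _ i, Fin.insertNth_apply_same,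
    Fin.insertNth_apply_succAbove]

theorem istar_insertNth_of_sum_lt {m : ℕ} (i : Fin (m + 1)) {t : PTree} {g : Fin m → PTree}
    (h : ∑ j, (g j).edges < t.edges) : istar (i.insertNth t g : Fin (m + 1) → PTree) = i := by
  refine istar_eq_of_forall_lt fun j => ?_
  simp only [Fin.insertNth_apply_same, Fin.insertNth_apply_succAbove]
  exact (Finset.single_le_sum (f := fun j => (g j).edges) (fun _ _ => zero_le)
    (Finset.mem_univ j)).trans_lt h

theorem tsum_removeAt_istar_of_two_mul_lt {m n : ℕ} {g : Fin m → PTree}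
    (h : 2 * ∑ i, (g i).edges < n) :
    (∑' f : Fin (m + 1) → PTree,
        if removeAt (istar f) f = g ∧ ∑ i, (f i).edges = n then forestMass f else 0) =
      (m + 1 : ℕ) * sizeProb 1 (n - ∑ i, (g i).edges) * forestMass g := by
  have insert_eq (i : Fin (m + 1)) (t : PTree) :
      (if istar (i.insertNth t g : Fin (m + 1) → PTree) = i then
        if t.edges + ∑ j, (g j).edges = n then gwProb t * forestMass g else 0 else 0) =
        (if t.edges = n - ∑ j, (g j).edges then gwProb t else 0) * forestMass g := by
    by_cases ht : t.edges = n - ∑ j, (g j).edges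
    · rw [if_pos (istar_insertNth_of_sum_lt i (by omega)), if_pos (by omega), if_pos ht]
    · rw [if_neg (show ¬t.edges + ∑ j, (g j).edges = n by omega), ite_self, if_neg ht, zero_mul]
  simp only [ite_and, tsum_ite_removeAt_istar_eq, sum_edges_insertNth, forestMass_insertNth,
    insert_eq, ENNReal.tsum_mul_right, ← sizeProb_one, Finset.sum_const, Finset.card_univ,
    Fintype.card_fin, nsmul_eq_mul, mul_assoc]

theorem forestMass_le_condLawRemoved {m n : ℕ} {g : Fin m → PTree}
    (h : 2 * ∑ i, (g i).edges < n) : forestMass g ≤ condLawRemoved m n g := by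
  rw [condLawRemoved, tsum_removeAt_istar_of_two_mul_lt h, ← sizeProb,
    ENNReal.le_div_iff_mul_le (.inl (sizeProb_succ_ne_zero _ _)) (.inl (sizeProb_ne_top _ _)),
    mul_comm]
  gcongr
  exact sizeProb_le_mul_sizeProb_one (by omega) (Nat.sub_le _ _)

theorem tsum_condLawRemoved (m n : ℕ) : ∑' g, condLawRemoved m n g = 1 := by
  simp only [condLawRemoved, div_eq_mul_inv]
  rw [ENNReal.tsum_mul_right, ENNReal.tsum_comm]
  simp only [ite_and, tsum_ite_eq']
  rw [← sizeProb]
  exact ENNReal.mul_inv_cancel (sizeProb_succ_ne_zero _ _) (sizeProb_ne_top _ _)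

theorem half_tsum_abs_toReal_sub_le {α : Type*} {P Q R : α → ℝ≥0∞} (hPQ : ∑' a, P a = ∑' a, Q a)
    (hP : ∑' a, P a ≠ ∞) (hR : ∑' a, R a ≠ ∞) (h : ∀ a, P a ≤ Q a + R a) :
    (1 / 2 : ℝ) * ∑' a, |(Q a).toReal - (P a).toReal| ≤ (∑' a, R a).toReal := by
  have hasSum_toReal {F : α → ℝ≥0∞} (hF : ∑' a, F a ≠ ∞) :
      HasSum (fun a => (F a).toReal) (∑' a, F a).toReal := by
    rw [ENNReal.tsum_toReal_eq fun a => ENNReal.ne_top_of_tsum_ne_top hF a]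
    exact (ENNReal.summable_toReal hF).hasSum
  have hQ : ∑' a, Q a ≠ ∞ := hPQ ▸ hP
  have hbound := ((hasSum_toReal hQ).sub (hasSum_toReal hP)).add ((hasSum_toReal hR).mul_left 2)
  have hle (a : α) : |(Q a).toReal - (P a).toReal| ≤
      (Q a).toReal - (P a).toReal + 2 * (R a).toReal := by
    have hQa : Q a ≠ ∞ := ENNReal.ne_top_of_tsum_ne_top hQ a
    have hRa : R a ≠ ∞ := ENNReal.ne_top_of_tsum_ne_top hR a
    have hPa : (P a).toReal ≤ (Q a).toReal + (R a).toReal := by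
      rw [← ENNReal.toReal_add hQa hRa]
      exact ENNReal.toReal_mono (ENNReal.add_ne_top.2 ⟨hQa, hRa⟩) (h a)
    have : 0 ≤ (R a).toReal := ENNReal.toReal_nonneg
    rw [abs_le]
    constructor <;> linarith
  have hsum := (Summable.of_nonneg_of_le (fun _ => abs_nonneg _) hle
    hbound.summable).tsum_le_tsum hle hbound.summable
  rw [hbound.tsum_eq, hPQ, sub_self, zero_add] at hsum
  linarith

theorem half_tsum_abs_condLawRemoved_sub_le (m : ℕ) {n : ℕ} (hn : n ≠ 0) :
    (1 / 2 : ℝ) * ∑' g : Fin m → PTree,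
      |(condLawRemoved m n g).toReal - (forestMass g).toReal| ≤ m / √n := by
  set K := (n + 1) / 2
  set tail : (Fin m → PTree) → ℝ≥0∞ := fun g => if K ≤ ∑ i, (g i).edges then forestMass g else 0
  have htail : ∑' g, tail g ≤ m * ENNReal.ofReal (walkProb 0 K) :=
    tsum_forestMass_large_le m (by omega)
  have htop : m * ENNReal.ofReal (walkProb 0 K) ≠ ∞ := by finiteness
  have hle (g : Fin m → PTree) : forestMass g ≤ condLawRemoved m n g + tail g := by
    by_cases hg : K ≤ ∑ i, (g i).edges
    · simp only [tail, if_pos hg, le_add_self]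
    · exact le_add_right (forestMass_le_condLawRemoved (by omega))
  calc (1 / 2 : ℝ) * ∑' g, |(condLawRemoved m n g).toReal - (forestMass g).toReal|
      ≤ (∑' g, tail g).toReal :=
        half_tsum_abs_toReal_sub_le (by rw [tsum_forestMass, tsum_condLawRemoved])
          (by simp [tsum_forestMass]) (ne_top_of_le_ne_top htop htail) hle
    _ ≤ m * walkProb 0 K := by
        simpa only [ENNReal.toReal_mul, ENNReal.toReal_natCast,
          ENNReal.toReal_ofReal (walkProb_pos 0 K).le] using ENNReal.toReal_mono htop htail
    _ ≤ m * (1 / √n) := by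
        have hK : (n : ℝ) ≤ 2 * K + 1 := mod_cast (by omega : n ≤ 2 * K + 1)
        gcongr
        exact (walkProb_zero_le K).trans (by gcongr)
    _ = m / √n := mul_one_div _ _

/-- If the number `σ_n (= σ n + 1)` of trees satisfies `σ_n = o(√n)`, the total variation
distance between the conditional law (given total size `n`) of the forest with its largest tree
removed and the law of `σ_n - 1` independent critical geometric Galton–Watson trees tends
to `0`. -/
theorem remove_big_tree_tv (σ : ℕ → ℕ)
    (hσ : Tendsto (fun n => ((σ n : ℝ) + 1) / Real.sqrt n) atTop (nhds 0)) :
    Tendsto (fun n => (1 / 2 : ℝ) *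
        ∑' g : Fin (σ n) → PTree,
          |(condLawRemoved (σ n) n g).toReal - (forestMass g).toReal|)
      atTop (nhds 0) := by
  refine tendsto_of_tendsto_of_tendsto_of_le_of_le' tendsto_const_nhds hσ
    (Eventually.of_forall fun n => mul_nonneg (by norm_num) (tsum_nonneg fun _ => abs_nonneg _)) ?_
  filter_upwards [eventually_ne_atTop 0] with n hn
  refine (half_tsum_abs_condLawRemoved_sub_le (σ n) hn).trans ?_
  gcongr
  linarith
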